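/- arXiv:2412.20968 — 6 statements merged into one kernel-verified Lean document; each statement's English description precedes it below -/
import Mathlib

section
/- Let A be a commutative ring and let (a_n)_{n∈ℕ} be a sequence of elements of A such that for all m ≤ n the element a_m lies in the ideal generated by a_n (so the principal ideals (a_0) ⊆ (a_1) ⊆ ⋯ form an increasing chain). Let (M_n)_{n∈ℕ} be a family of A-modules such that a_n annihilates M_n for every n. Then the canonical A-linear map from the direct sum ⊕_{n∈ℕ} M_n to the product ∏_{n∈ℕ} M_n is injective, and for every m ∈ ℕ and every x ∈ ∏_{n∈ℕ} M_n the element a_m • x lies in the image of this map; consequently the cokernel of the map is annihilated by every element of the ideal I = ⋃_n (a_n). -/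
open Filter

section Semiring

variable {ι A : Type*} {M : ι → Type*} [Semiring A] [∀ i, AddCommMonoid (M i)]
  [∀ i, Module A (M i)]

theorem mem_range_coeFnLinearMap_iff {x : ∀ i, M i} :
    x ∈ LinearMap.range (DFinsupp.coeFnLinearMap A) ↔ ∀ᶠ i in cofinite, x i = 0 := by
  classical
  constructor
  · rintro ⟨f, rfl⟩
    exact f.finite_support
  · intro hx
    have hfin : {i | x i ≠ 0}.Finite := hx
    refine ⟨DFinsupp.mk hfin.toFinset fun i ↦ x i, funext fun i ↦ ?_⟩
    by_cases hi : x i = 0 <;> simp [hi]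

theorem smul_mem_range_coeFnLinearMap {b : A}
    (hb : ∀ᶠ i in cofinite, b ∈ Module.annihilator A (M i)) (x : ∀ i, M i) :
    b • x ∈ LinearMap.range (DFinsupp.coeFnLinearMap A) :=
  mem_range_coeFnLinearMap_iff.2 <| hb.mono fun i hi ↦ Module.mem_annihilator.1 hi (x i)

theorem eventually_atTop_mem_annihilator [Preorder ι] {a : ι → A}
    (hchain : ∀ i j, i ≤ j → a i ∈ Ideal.span {a j})
    (hann : ∀ i, a i ∈ Module.annihilator A (M i)) (i : ι) :
    ∀ᶠ j in atTop, a i ∈ Module.annihilator A (M j) :=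
  (eventually_ge_atTop i).mono fun j hij ↦
    (Ideal.span_singleton_le_iff_mem _).2 (hann j) (hchain i j hij)

end Semiring

theorem stmt0_general {ι κ A : Type*} [Ring A] {M : ι → Type*} [∀ i, AddCommGroup (M i)]
    [∀ i, Module A (M i)] (a : κ → A)
    (ha : ∀ k, ∀ᶠ i in cofinite, a k ∈ Module.annihilator A (M i)) :
    Function.Injective (DFinsupp.coeFnLinearMap A : (Π₀ i, M i) →ₗ[A] ∀ i, M i) ∧
    (∀ (k : κ) (x : ∀ i, M i), a k • x ∈ LinearMap.range (DFinsupp.coeFnLinearMap A)) ∧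
    (∀ b : A, b ∈ ⋃ k, (Ideal.span {a k} : Set A) →
      ∀ x : ∀ i, M i,
        b • (Submodule.Quotient.mk x :
          (∀ i, M i) ⧸ LinearMap.range (DFinsupp.coeFnLinearMap A)) = 0) := by
  refine ⟨DFunLike.coe_injective, fun k ↦ smul_mem_range_coeFnLinearMap (ha k), fun b hb x ↦ ?_⟩
  obtain ⟨k, hbk⟩ := Set.mem_iUnion.1 hb
  have hb_ann : ∀ᶠ i in cofinite, b ∈ Module.annihilator A (M i) :=
    (ha k).mono fun i hi ↦ (Ideal.span_singleton_le_iff_mem _).2 hi hbk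
  exact (Submodule.Quotient.mk_eq_zero _).2 (smul_mem_range_coeFnLinearMap hb_ann x)

/-!
Let `A` be a commutative ring and `(aₙ)` a sequence of elements such that `aₘ ∈ (aₙ)` for
`m ≤ n`.  Let `(Mₙ)` be a family of `A`-modules with `aₙ • Mₙ = 0`.  Then the canonical map
`⊕ₙ Mₙ → ∏ₙ Mₙ` is injective, every element `aₘ • x` of the product lies in its image, and
consequently the cokernel is annihilated by every element of the ideal `I = ⋃ₙ (aₙ)`.

The canonical map `ι` is characterized by `ι f n = f n`.
-/
theorem stmt0 (A : Type) [CommRing A] (a : ℕ → A)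
    (hchain : ∀ m n : ℕ, m ≤ n → a m ∈ Ideal.span {a n})
    (M : ℕ → Type) [∀ n, AddCommGroup (M n)] [∀ n, Module A (M n)]
    (hann : ∀ (n : ℕ) (x : M n), a n • x = 0)
    (ι : (Π₀ n, M n) →ₗ[A] ((n : ℕ) → M n))
    (hι : ∀ (f : Π₀ n, M n) (n : ℕ), ι f n = f n) :
    Function.Injective ι ∧
    (∀ (m : ℕ) (x : (n : ℕ) → M n), a m • x ∈ LinearMap.range ι) ∧
    (∀ b : A, b ∈ ⋃ n, (Ideal.span {a n} : Set A) →
      ∀ x : (n : ℕ) → M n,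
        b • (Submodule.Quotient.mk x :
          ((n : ℕ) → M n) ⧸ LinearMap.range ι) = 0) := by
  obtain rfl : ι = DFinsupp.coeFnLinearMap A := LinearMap.ext fun f ↦ funext (hι f)
  have ha (m : ℕ) : ∀ᶠ n in cofinite, a m ∈ Module.annihilator A (M n) := by
    rw [Nat.cofinite_eq_atTop]
    exact eventually_atTop_mem_annihilator hchain (fun n ↦ Module.mem_annihilator.2 (hann n)) m
  exact stmt0_general a ha
end

section
/- Let R be a commutative ring, ϖ ∈ R, and p a prime. Let B := R[X,Y]/(XY − ϖ^p) and A := R[X,Y]/(XY − ϖ), each a free R-module with basis {1} ∪ {X^k : k ≥ 1} ∪ {Y^k : k ≥ 1}. The assignment X ↦ X^p, Y ↦ Y^p determines a well-defined R-algebra homomorphism ι : B → A, and ι is injective. Moreover ι is split injective as a morphism of B-modules (A being a B-module via ι): the R-linear map σ : A → B defined on the basis by σ(1) = 1, σ(X^{pk}) = X^k, σ(Y^{pk}) = Y^k for k ≥ 1, and σ(X^k) = σ(Y^k) = 0 whenever p does not divide k, is B-linear and satisfies σ ∘ ι = id_B. -/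
open MvPolynomial

noncomputable section

/-- The ring `R[X,Y]/(XY - ϖ)`. -/
abbrev CurveRing (R : Type) [CommRing R] (ϖ : R) : Type :=
  MvPolynomial (Fin 2) R ⧸
    Ideal.span {(X 0 : MvPolynomial (Fin 2) R) * X 1 - C ϖ}

/-- The class of `X` in `R[X,Y]/(XY - ϖ)`. -/
def cX (R : Type) [CommRing R] (ϖ : R) : CurveRing R ϖ :=
  Ideal.Quotient.mk _ (X 0)

/-- The class of `Y` in `R[X,Y]/(XY - ϖ)`. -/
def cY (R : Type) [CommRing R] (ϖ : R) : CurveRing R ϖ :=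
  Ideal.Quotient.mk _ (X 1)

/-!
Write `e n` (`n : ℤ`) for `X ^ n` when `n ≥ 0` and for `Y ^ (-n)` when `n ≤ 0`. Since `XY = ϖ`,
`X ^ a * Y ^ b = ϖ ^ min a b • e (a - b)`, so the `e n` span; they are independent because the
same formula defines coordinates on polynomials that vanish on the ideal `(XY - ϖ)`. It also gives
`e m * e n = ϖ ^ c m n • e (m + n)` with `c m n = min (m⁺ + n⁺) (m⁻ + n⁻)`. Now `ι` maps `e k` to
`e (p * k)`, and `σ` is `B`-linear because `p` divides `p * k + n` only if it divides `n`, in which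
case, for `n = p * l`, `c (p * k) (p * l) = p * c k l` turns powers of `ϖ` into powers of `ϖ ^ p`.
-/

lemma toNat_natCast_mul (p : ℕ) (n : ℤ) : (p * n).toNat = p * n.toNat := by
  zify
  rw [Int.toNat_eq_max, Int.toNat_eq_max, mul_max_of_nonneg _ _ p.cast_nonneg, mul_zero]

namespace CurveRing

variable {R : Type} [CommRing R] (ϖ : R)

lemma cX_mul_cY : cX R ϖ * cY R ϖ = algebraMap R (CurveRing R ϖ) ϖ :=
  Ideal.Quotient.eq.mpr (Ideal.mem_span_singleton_self _)

/-- The degree `n` element of the standard `R`-basis of `R[X,Y]/(XY - ϖ)`, graded by `deg X = 1`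
and `deg Y = -1`: it is `X ^ n` for `0 ≤ n` and `Y ^ (-n)` for `n ≤ 0`. Indexing by `ℤ` treats the
powers of `X` and of `Y` uniformly. -/
def gradedMonomial (n : ℤ) : CurveRing R ϖ :=
  cX R ϖ ^ n.toNat * cY R ϖ ^ (-n).toNat

@[simp]
lemma gradedMonomial_zero : gradedMonomial ϖ 0 = 1 := by
  simp [gradedMonomial]

lemma gradedMonomial_natCast (k : ℕ) : gradedMonomial ϖ k = cX R ϖ ^ k := by
  simp [gradedMonomial]

lemma gradedMonomial_neg_natCast (k : ℕ) : gradedMonomial ϖ (-k) = cY R ϖ ^ k := by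
  simp [gradedMonomial]

lemma cX_pow_mul_cY_pow (a b : ℕ) :
    cX R ϖ ^ a * cY R ϖ ^ b = ϖ ^ min a b • gradedMonomial ϖ (a - b) := by
  have ha : min a b + (a - b : ℤ).toNat = a := by omega
  have hb : min a b + (-(a - b : ℤ)).toNat = b := by omega
  calc cX R ϖ ^ a * cY R ϖ ^ b
      = (cX R ϖ * cY R ϖ) ^ min a b * gradedMonomial ϖ (a - b) := by
        rw [gradedMonomial, mul_pow, mul_mul_mul_comm, ← pow_add, ← pow_add, ha, hb]
    _ = ϖ ^ min a b • gradedMonomial ϖ (a - b) := by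
        rw [cX_mul_cY, ← map_pow, ← Algebra.smul_def]

lemma gradedMonomial_mul (m n : ℤ) :
    gradedMonomial ϖ m * gradedMonomial ϖ n =
      ϖ ^ min (m.toNat + n.toNat) ((-m).toNat + (-n).toNat) • gradedMonomial ϖ (m + n) := by
  have hdeg : ((m.toNat + n.toNat : ℕ) - ((-m).toNat + (-n).toNat : ℕ) : ℤ) = m + n := by omega
  rw [← hdeg, ← cX_pow_mul_cY_pow, gradedMonomial, gradedMonomial]
  ring

/-- The coordinates of a polynomial, reduced modulo `XY - ϖ`, in the family `gradedMonomial ϖ`: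
reduction takes `X ^ a * Y ^ b` to `ϖ ^ min a b` times the basis element of degree `a - b`. -/
def polyCoords : MvPolynomial (Fin 2) R →ₗ[R] ℤ →₀ R :=
  (basisMonomials (Fin 2) R).constr R fun m =>
    Finsupp.single (m 0 - m 1 : ℤ) (ϖ ^ min (m 0) (m 1))

lemma polyCoords_monomial (m : Fin 2 →₀ ℕ) :
    polyCoords ϖ (monomial m 1) = Finsupp.single (m 0 - m 1 : ℤ) (ϖ ^ min (m 0) (m 1)) := by
  simpa only [polyCoords, coe_basisMonomials] using
    (basisMonomials (Fin 2) R).constr_basis R _ m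

lemma polyCoords_X_mul_X_mul (f : MvPolynomial (Fin 2) R) :
    polyCoords ϖ (X 0 * X 1 * f) = ϖ • polyCoords ϖ f := by
  suffices polyCoords ϖ ∘ₗ LinearMap.mulLeft R (X 0 * X 1) = ϖ • polyCoords ϖ from
    LinearMap.congr_fun this f
  refine (basisMonomials (Fin 2) R).ext fun m => ?_
  simp [X, monomial_mul, polyCoords_monomial, pow_succ', add_comm 1]

lemma span_le_ker_polyCoords :
    (Ideal.span {(X 0 : MvPolynomial (Fin 2) R) * X 1 - C ϖ}).restrictScalars R ≤
      LinearMap.ker (polyCoords ϖ) := by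
  intro f hf
  obtain ⟨g, rfl⟩ := Ideal.mem_span_singleton.mp hf
  rw [LinearMap.mem_ker, sub_mul, map_sub, polyCoords_X_mul_X_mul, ← smul_eq_C_mul, map_smul,
    sub_self]

lemma polyCoords_X_pow_mul_X_pow (a b : ℕ) :
    polyCoords ϖ (X 0 ^ a * X 1 ^ b) = Finsupp.single (a - b : ℤ) (ϖ ^ min a b) := by
  simp [X_pow_eq_monomial, monomial_mul, polyCoords_monomial]

lemma linearIndependent_gradedMonomial : LinearIndependent R (gradedMonomial ϖ) := by
  let polyLift (n : ℤ) : MvPolynomial (Fin 2) R := X 0 ^ n.toNat * X 1 ^ (-n).toNat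
  have polyCoords_polyLift (n : ℤ) : polyCoords ϖ (polyLift n) = Finsupp.single n 1 := by
    have hdeg : (n.toNat - (-n).toNat : ℤ) = n := by omega
    have hmin : min n.toNat (-n).toNat = 0 := by omega
    rw [polyCoords_X_pow_mul_X_pow, hdeg, hmin, pow_zero]
  rw [linearIndependent_iff]
  intro c hc
  have mk_polyLift : Ideal.Quotient.mkₐ R _ (Finsupp.linearCombination R polyLift c) =
      Finsupp.linearCombination R (gradedMonomial ϖ) c :=
    Finsupp.apply_linearCombination R (Ideal.Quotient.mkₐ R _).toLinearMap polyLift c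
  have hker : Finsupp.linearCombination R polyLift c ∈ LinearMap.ker (polyCoords ϖ) :=
    span_le_ker_polyCoords ϖ (Ideal.Quotient.eq_zero_iff_mem.mp (mk_polyLift.trans hc))
  calc c = Finsupp.linearCombination R (fun n => Finsupp.single n 1) c := by
        simp [Finsupp.linearCombination_apply]
    _ = polyCoords ϖ (Finsupp.linearCombination R polyLift c) := by
        rw [Finsupp.apply_linearCombination]
        exact congrArg (Finsupp.linearCombination R · c) (funext polyCoords_polyLift).symm
    _ = 0 := hker

lemma mk_monomial (m : Fin 2 →₀ ℕ) (r : R) :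
    (Ideal.Quotient.mk _ (monomial m r) : CurveRing R ϖ) =
      r • (cX R ϖ ^ m 0 * cY R ϖ ^ m 1) := by
  rw [monomial_eq, Finsupp.prod_fintype _ _ fun i => pow_zero _, Fin.prod_univ_two,
    map_mul, map_mul, map_pow, map_pow]
  exact (Algebra.smul_def (A := CurveRing R ϖ) r _).symm

lemma span_range_gradedMonomial : Submodule.span R (Set.range (gradedMonomial ϖ)) = ⊤ := by
  refine eq_top_iff.mpr fun x _ => ?_
  obtain ⟨f, rfl⟩ := Ideal.Quotient.mk_surjective x
  induction f using MvPolynomial.induction_on' with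
  | monomial m r =>
    rw [mk_monomial, cX_pow_mul_cY_pow]
    exact Submodule.smul_mem _ _ (Submodule.smul_mem _ _ (Submodule.subset_span ⟨_, rfl⟩))
  | add f g hf hg =>
    rw [map_add]
    exact Submodule.add_mem _ (hf trivial) (hg trivial)

/-- The standard `R`-basis `{1} ∪ {X ^ k : k ≥ 1} ∪ {Y ^ k : k ≥ 1}` of `R[X,Y]/(XY - ϖ)`,
indexed by degree as in `gradedMonomial`. -/
def basis : Module.Basis ℤ R (CurveRing R ϖ) :=
  .mk (linearIndependent_gradedMonomial ϖ) (span_range_gradedMonomial ϖ).ge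

@[simp]
lemma basis_apply (n : ℤ) : basis ϖ n = gradedMonomial ϖ n :=
  Module.Basis.mk_apply _ _ n

/-- The `R`-algebra map `ι : X ↦ X ^ p, Y ↦ Y ^ p` from `R[X,Y]/(XY - ϖ ^ p)` to
`R[X,Y]/(XY - ϖ)`, named after `MvPolynomial.expand`. -/
def expand (p : ℕ) : CurveRing R (ϖ ^ p) →ₐ[R] CurveRing R ϖ :=
  Ideal.Quotient.liftₐ _ (aeval ![cX R ϖ ^ p, cY R ϖ ^ p]) fun f hf => by
    obtain ⟨g, rfl⟩ := Ideal.mem_span_singleton.mp hf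
    simp [← mul_pow, cX_mul_cY]

/-- The `R`-linear map `σ` from `R[X,Y]/(XY - ϖ)` to `R[X,Y]/(XY - ϖ ^ p)` that forgets the
coefficients in degrees not divisible by `p`. -/
def contract (p : ℕ) : CurveRing R ϖ →ₗ[R] CurveRing R (ϖ ^ p) :=
  (basis ϖ).constr R fun n => if (p : ℤ) ∣ n then gradedMonomial (ϖ ^ p) (n / p) else 0

variable (p : ℕ)

lemma expand_cX : expand ϖ p (cX R (ϖ ^ p)) = cX R ϖ ^ p :=
  aeval_X ![cX R ϖ ^ p, cY R ϖ ^ p] 0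

lemma expand_cY : expand ϖ p (cY R (ϖ ^ p)) = cY R ϖ ^ p :=
  aeval_X ![cX R ϖ ^ p, cY R ϖ ^ p] 1

lemma expand_gradedMonomial (n : ℤ) :
    expand ϖ p (gradedMonomial (ϖ ^ p) n) = gradedMonomial ϖ (p * n) := by
  simp only [gradedMonomial, map_mul, map_pow, expand_cX, expand_cY, ← pow_mul, ← mul_neg,
    toNat_natCast_mul]

lemma contract_one : contract ϖ p 1 = 1 := by
  rw [← gradedMonomial_zero, ← basis_apply, contract, Module.Basis.constr_basis,
    if_pos (dvd_zero _), Int.zero_ediv, gradedMonomial_zero]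

variable {p}

lemma contract_gradedMonomial_of_not_dvd {n : ℤ} (hn : ¬(p : ℤ) ∣ n) :
    contract ϖ p (gradedMonomial ϖ n) = 0 := by
  rw [← basis_apply, contract, Module.Basis.constr_basis, if_neg hn]

lemma contract_gradedMonomial_natCast_mul (hp : p ≠ 0) (n : ℤ) :
    contract ϖ p (gradedMonomial ϖ (p * n)) = gradedMonomial (ϖ ^ p) n := by
  rw [← basis_apply, contract, Module.Basis.constr_basis, if_pos (dvd_mul_right _ _),
    Int.mul_ediv_cancel_left _ (Nat.cast_ne_zero.mpr hp)]

lemma contract_gradedMonomial_mul_gradedMonomial (hp : p ≠ 0) (k n : ℤ) :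
    contract ϖ p (gradedMonomial ϖ (p * k) * gradedMonomial ϖ n) =
      gradedMonomial (ϖ ^ p) k * contract ϖ p (gradedMonomial ϖ n) := by
  rw [gradedMonomial_mul, map_smul]
  by_cases hn : (p : ℤ) ∣ n
  · obtain ⟨l, rfl⟩ := hn
    rw [← mul_add, contract_gradedMonomial_natCast_mul ϖ hp,
      contract_gradedMonomial_natCast_mul ϖ hp, gradedMonomial_mul, ← pow_mul]
    simp only [← mul_neg, toNat_natCast_mul, ← mul_add, Nat.mul_min_mul_left]
  · have hkn : ¬(p : ℤ) ∣ p * k + n := by rwa [Int.dvd_add_right (dvd_mul_right _ _)]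
    rw [contract_gradedMonomial_of_not_dvd ϖ hkn, contract_gradedMonomial_of_not_dvd ϖ hn,
      smul_zero, mul_zero]

lemma contract_expand_mul (hp : p ≠ 0) (b : CurveRing R (ϖ ^ p)) (x : CurveRing R ϖ) :
    contract ϖ p (expand ϖ p b * x) = b * contract ϖ p x := by
  suffices ((LinearMap.mul R _).comp (expand ϖ p).toLinearMap).compr₂ (contract ϖ p) =
      (LinearMap.mul R _).compl₂ (contract ϖ p) from
    LinearMap.congr_fun₂ this b x
  refine (basis (ϖ ^ p)).ext fun k => (basis ϖ).ext fun n => ?_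
  simpa [expand_gradedMonomial] using contract_gradedMonomial_mul_gradedMonomial ϖ hp k n

lemma contract_expand (hp : p ≠ 0) (b : CurveRing R (ϖ ^ p)) :
    contract ϖ p (expand ϖ p b) = b := by
  simpa only [mul_one, contract_one] using contract_expand_mul ϖ hp b 1

end CurveRing

theorem stmt2_general (R : Type) [CommRing R] (ϖ : R) (p : ℕ) (hp : p ≠ 0) :
    ∃ ι : CurveRing R (ϖ ^ p) →ₐ[R] CurveRing R ϖ,
      ι (cX R (ϖ ^ p)) = cX R ϖ ^ p ∧
      ι (cY R (ϖ ^ p)) = cY R ϖ ^ p ∧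
      Function.Injective ι ∧
      ∃ σ : CurveRing R ϖ →ₗ[R] CurveRing R (ϖ ^ p),
        σ 1 = 1 ∧
        (∀ k : ℕ, 1 ≤ k → σ (cX R ϖ ^ (p * k)) = cX R (ϖ ^ p) ^ k) ∧
        (∀ k : ℕ, 1 ≤ k → σ (cY R ϖ ^ (p * k)) = cY R (ϖ ^ p) ^ k) ∧
        (∀ k : ℕ, ¬ p ∣ k → σ (cX R ϖ ^ k) = 0 ∧ σ (cY R ϖ ^ k) = 0) ∧
        (∀ (b : CurveRing R (ϖ ^ p)) (x : CurveRing R ϖ), σ (ι b * x) = b * σ x) ∧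
        (∀ b : CurveRing R (ϖ ^ p), σ (ι b) = b) := by
  refine ⟨CurveRing.expand ϖ p, CurveRing.expand_cX ϖ p, CurveRing.expand_cY ϖ p,
    Function.LeftInverse.injective (CurveRing.contract_expand ϖ hp), CurveRing.contract ϖ p,
    CurveRing.contract_one ϖ p, fun k _ => ?_, fun k _ => ?_, fun k hk => ⟨?_, ?_⟩,
    CurveRing.contract_expand_mul ϖ hp, CurveRing.contract_expand ϖ hp⟩
  · rw [← CurveRing.gradedMonomial_natCast, ← CurveRing.gradedMonomial_natCast, Nat.cast_mul,
      CurveRing.contract_gradedMonomial_natCast_mul ϖ hp]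
  · rw [← CurveRing.gradedMonomial_neg_natCast, ← CurveRing.gradedMonomial_neg_natCast,
      Nat.cast_mul, ← mul_neg, CurveRing.contract_gradedMonomial_natCast_mul ϖ hp]
  · rw [← CurveRing.gradedMonomial_natCast]
    exact CurveRing.contract_gradedMonomial_of_not_dvd ϖ (mod_cast hk)
  · rw [← CurveRing.gradedMonomial_neg_natCast]
    exact CurveRing.contract_gradedMonomial_of_not_dvd ϖ (by rwa [dvd_neg, Int.natCast_dvd_natCast])

/-!
With `B = R[X,Y]/(XY - ϖ^p)` and `A = R[X,Y]/(XY - ϖ)`, the assignment `X ↦ X^p`,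
`Y ↦ Y^p` determines a well-defined injective `R`-algebra homomorphism `ι : B → A`,
which is split injective as a morphism of `B`-modules: the `R`-linear map `σ : A → B`
with `σ 1 = 1`, `σ (X^(pk)) = X^k`, `σ (Y^(pk)) = Y^k` (for `k ≥ 1`) and
`σ (X^k) = σ (Y^k) = 0` when `p ∤ k` is `B`-linear and satisfies `σ ∘ ι = id`.
-/
theorem stmt2 (R : Type) [CommRing R] (ϖ : R) (p : ℕ) (hp : p.Prime) :
    ∃ ι : CurveRing R (ϖ ^ p) →ₐ[R] CurveRing R ϖ,
      ι (cX R (ϖ ^ p)) = cX R ϖ ^ p ∧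
      ι (cY R (ϖ ^ p)) = cY R ϖ ^ p ∧
      Function.Injective ι ∧
      ∃ σ : CurveRing R ϖ →ₗ[R] CurveRing R (ϖ ^ p),
        σ 1 = 1 ∧
        (∀ k : ℕ, 1 ≤ k → σ (cX R ϖ ^ (p * k)) = cX R (ϖ ^ p) ^ k) ∧
        (∀ k : ℕ, 1 ≤ k → σ (cY R ϖ ^ (p * k)) = cY R (ϖ ^ p) ^ k) ∧
        (∀ k : ℕ, ¬ p ∣ k → σ (cX R ϖ ^ k) = 0 ∧ σ (cY R ϖ ^ k) = 0) ∧
        (∀ (b : CurveRing R (ϖ ^ p)) (x : CurveRing R ϖ), σ (ι b * x) = b * σ x) ∧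
        (∀ b : CurveRing R (ϖ ^ p), σ (ι b) = b) :=
  stmt2_general R ϖ p hp.ne_zero

end
end

section
/- Let R be a commutative ring, ϖ ∈ R, and N ≥ 1 an integer. Let A := R[T,S] be the polynomial ring in two variables and let B := R[X,Y]/(XY − ϖ), regarded as an A-module via the R-algebra homomorphism A → B sending T ↦ X^N and S ↦ Y^N (under which B is a finitely generated A-module). Then for every i ≠ 1 the module Ext^i_A(B, A) vanishes (in particular Hom_A(B, A) = 0), and Ext^1_A(B, A) is isomorphic to B as an A-module. -/
open MvPolynomial CategoryTheory

noncomputable section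

/-- The ring homomorphism `A = R[T,S] → B = R[X,Y]/(XY - ϖ)` sending `T ↦ X^N`, `S ↦ Y^N`. -/
def toCurve (R : Type) [CommRing R] (ϖ : R) (N : ℕ) :
    MvPolynomial (Fin 2) R →+* CurveRing R ϖ :=
  (aeval ![cX R ϖ ^ N, cY R ϖ ^ N]).toRingHom

/-- `B = R[X,Y]/(XY - ϖ)` regarded as a module over `A = R[T,S]` via `T ↦ X^N`, `S ↦ Y^N`. -/
def curveModule (R : Type) [CommRing R] (ϖ : R) (N : ℕ) :
    Module (MvPolynomial (Fin 2) R) (CurveRing R ϖ) :=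
  Module.compHom (CurveRing R ϖ) (toCurve R ϖ N)

/-- `B`, with the above `A`-module structure, as an object of `ModuleCat A`. -/
def curveModCat (R : Type) [CommRing R] (ϖ : R) (N : ℕ) :
    ModuleCat (MvPolynomial (Fin 2) R) :=
  @ModuleCat.of (MvPolynomial (Fin 2) R) _ (CurveRing R ϖ) _ (curveModule R ϖ N)

/-!
Through `T ↦ X^N`, `S ↦ Y^N` the ring `R[X,Y]` is free over `A = R[T,S]` on the monomials whose
exponents are less than `N`, and multiplication by `q = XY - ϖ` is injective, so that
`0 → R[X,Y] → R[X,Y] → B → 0` is a free resolution of `B`. Let `τ : R[X,Y] → A` be the coordinate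
of `(XY)^(N-1)`. The pairing `τ(fg)` is perfect, since `X^i Y^j` and `X^(N-1-i) Y^(N-1-j)` are dual
to each other, and multiplication by `q` is self-adjoint for it. Hence the `A`-dual of the
resolution is the resolution itself with its direction reversed: its only cohomology is `B`, in
degree `1`.
-/

universe u v w

section Homological

open Limits

variable {C : Type u} [Category.{v} C] [Abelian C] {S : ShortComplex C}

/-- The complex `⋯ ⟶ 0 ⟶ X₁ ⟶ X₂` with `X₂` in degree `0`, attached to a short complex
`X₁ ⟶ X₂ ⟶ X₃`. -/
def twoTermComplex (S : ShortComplex C) : ChainComplex C ℕ :=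
  ((ChainComplex.single₀ C).obj S.X₁).augment S.f zero_comp

lemma isZero_twoTermComplex_X (S : ShortComplex C) (n : ℕ) :
    IsZero ((twoTermComplex S).X (n + 2)) :=
  HomologicalComplex.isZero_single_obj_X (.down ℕ) 0 S.X₁ (n + 1) n.succ_ne_zero

/-- The augmentation of `twoTermComplex S` given by `X₂ ⟶ X₃`. -/
def twoTermComplexπ (S : ShortComplex C) :
    twoTermComplex S ⟶ (ChainComplex.single₀ C).obj S.X₃ :=
  (ChainComplex.toSingle₀Equiv _ _).symm ⟨S.g, S.zero⟩

lemma quasiIso_twoTermComplexπ (hS : S.ShortExact) : QuasiIso (twoTermComplexπ S) where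
  quasiIsoAt
    | 0 => by
      rw [ChainComplex.quasiIsoAt₀_iff, ShortComplex.quasiIso_iff_of_zeros' _ rfl rfl rfl]
      refine (ShortComplex.exact_and_epi_g_iff_of_iso ?_).2 ⟨hS.exact, hS.epi_g⟩
      refine ShortComplex.isoMk (Iso.refl _) (Iso.refl _) (Iso.refl _) ?_ ?_
      · exact (Category.id_comp _).trans (Category.comp_id _).symm
      · have hπ : S.g = (twoTermComplexπ S).f 0 :=
          (ChainComplex.toSingle₀Equiv_symm_apply_f_zero (C := twoTermComplex S) S.g S.zero).symm
        exact (Category.id_comp _).trans (hπ.trans (Category.comp_id _).symm)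
    | 1 => by
      rw [quasiIsoAt_iff_exactAt' _ _ (ChainComplex.exactAt_succ_single_obj _ _),
        HomologicalComplex.exactAt_iff' _ 2 1 0 (by simp) (by simp),
        ShortComplex.exact_iff_mono _ ((isZero_twoTermComplex_X S 0).eq_of_src _ _)]
      exact hS.mono_f
    | n + 2 => by
      rw [quasiIsoAt_iff_exactAt' _ _ (ChainComplex.exactAt_succ_single_obj _ _)]
      exact ShortComplex.exact_of_isZero_X₂ _ (isZero_twoTermComplex_X S n)

/-- A short exact sequence `0 ⟶ X₁ ⟶ X₂ ⟶ X₃ ⟶ 0` with `X₁` and `X₂` projective, as a projective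
resolution of `X₃`. -/
def twoTermResolution (hS : S.ShortExact) [Projective S.X₁] [Projective S.X₂] :
    ProjectiveResolution S.X₃ where
  complex := twoTermComplex S
  projective
    | 0 => ‹Projective S.X₂›
    | 1 => ‹Projective S.X₁›
    | n + 2 => (isZero_twoTermComplex_X S n).projective
  π := twoTermComplexπ S
  quasiIso := quasiIso_twoTermComplexπ hS

variable {R : Type w} [Ring R] [Linear R C]

lemma isZero_linearYonedaObj_twoTermComplex_X (S : ShortComplex C) (Y : C) (n : ℕ) :
    IsZero (((twoTermComplex S).linearYonedaObj R Y).X (n + 2)) := by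
  have : Subsingleton (((twoTermComplex S).linearYonedaObj R Y).X (n + 2)) :=
    ⟨(isZero_twoTermComplex_X S n).eq_of_src⟩
  exact ModuleCat.isZero_of_subsingleton _

variable [EnoughProjectives C] [Projective S.X₁] [Projective S.X₂]

lemma subsingleton_ext_add_two (hS : S.ShortExact) (Y : C) (n : ℕ) :
    Subsingleton (((Ext R C (n + 2)).obj (.op S.X₃)).obj Y) := by
  refine ModuleCat.subsingleton_of_isZero (.of_iso ?_ ((twoTermResolution hS).isoExt (n + 2) Y))
  rw [← HomologicalComplex.exactAt_iff_isZero_homology]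
  exact ShortComplex.exact_of_isZero_X₂ _ (isZero_linearYonedaObj_twoTermComplex_X S Y n)

lemma subsingleton_ext_zero (hS : S.ShortExact) (Y : C)
    (hY : Function.Injective (Linear.leftComp R Y S.f)) :
    Subsingleton (((Ext R C 0).obj (.op S.X₃)).obj Y) := by
  refine ModuleCat.subsingleton_of_isZero (.of_iso ?_ ((twoTermResolution hS).isoExt 0 Y))
  rw [← HomologicalComplex.exactAt_iff_isZero_homology,
    HomologicalComplex.exactAt_iff' _ 0 0 1 (by simp) (by simp),
    ShortComplex.exact_iff_mono _
      (((twoTermComplex S).linearYonedaObj R Y).shape 0 0 (by simp))]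
  exact (ModuleCat.mono_iff_injective _).2 hY

/-- `Ext¹(X₃, Y)` as the cokernel of `Hom(X₂, Y) → Hom(X₁, Y)`, for a short exact sequence
`0 ⟶ X₁ ⟶ X₂ ⟶ X₃ ⟶ 0` with `X₁` and `X₂` projective. -/
def extOneEquiv (hS : S.ShortExact) (Y : C) :
    ((Ext R C 1).obj (.op S.X₃)).obj Y ≃ₗ[R]
      (S.X₁ ⟶ Y) ⧸ LinearMap.range (Linear.leftComp R Y S.f) :=
  let K := (twoTermComplex S).linearYonedaObj R Y
  have hg : (K.sc' 0 1 2).g = 0 := (isZero_linearYonedaObj_twoTermComplex_X S Y 0).eq_of_tgt _ _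
  ((twoTermResolution hS).isoExt 1 Y ≪≫
    ShortComplex.homologyMapIso (K.isoSc' 0 1 2 (by simp) (by simp)) ≪≫
    (K.sc' 0 1 2).asIsoHomologyι hg ≪≫ (K.sc' 0 1 2).moduleCatOpcyclesIso).toLinearEquiv

end Homological

section SelfAdjoint

variable {A : Type u} [CommRing A] {P : Type v} [AddCommGroup P] [Module A P]
  {b : P →ₗ[A] P →ₗ[A] A} [b.IsPerfPair] {d : P →ₗ[A] P}

lemma toPerfPair_symm_comp (hb : b.IsSelfAdjoint d) (φ : Module.Dual A P) :
    b.toPerfPair.symm (φ ∘ₗ d) = d (b.toPerfPair.symm φ) := by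
  rw [LinearEquiv.symm_apply_eq]
  ext x
  rw [b.toPerfPair_apply, hb, b.apply_symm_toPerfPair_self, LinearMap.comp_apply]

end SelfAdjoint

section SelfDual

variable {A : Type u} [CommRing A] {P : Type u} [AddCommGroup P] [Module A P]
  {b : P →ₗ[A] P →ₗ[A] A} [b.IsPerfPair] {d : P →ₗ[A] P}
  {M : ModuleCat.{u} A} {π : P →ₗ[A] M}

/-- Functionals on `P`, as morphisms in `ModuleCat A`, identified with elements of `P` by means of
a perfect pairing. -/
def homEquivOfIsPerfPair (b : P →ₗ[A] P →ₗ[A] A) [b.IsPerfPair] :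
    (ModuleCat.of A P ⟶ ModuleCat.of A A) ≃ₗ[A] P :=
  ModuleCat.homLinearEquiv ≪≫ₗ b.toPerfPair.symm

lemma homEquivOfIsPerfPair_comp_leftComp (hb : b.IsSelfAdjoint d) :
    (homEquivOfIsPerfPair b).toLinearMap ∘ₗ Linear.leftComp A (.of A A) (ModuleCat.ofHom d) =
      d ∘ₗ (homEquivOfIsPerfPair b).toLinearMap :=
  LinearMap.ext fun φ => toPerfPair_symm_comp hb φ.hom

lemma injective_leftComp (hb : b.IsSelfAdjoint d) (hd : Function.Injective d) :
    Function.Injective (Linear.leftComp A (.of A A) (ModuleCat.ofHom d)) := by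
  refine .of_comp (f := (homEquivOfIsPerfPair b).toLinearMap) ?_
  rw [← LinearMap.coe_comp, homEquivOfIsPerfPair_comp_leftComp hb]
  exact hd.comp (homEquivOfIsPerfPair b).injective

lemma map_range_leftComp (hb : b.IsSelfAdjoint d) :
    (LinearMap.range (Linear.leftComp A (.of A A) (ModuleCat.ofHom d))).map
      (homEquivOfIsPerfPair b).toLinearMap = LinearMap.range d := by
  rw [← LinearMap.range_comp, homEquivOfIsPerfPair_comp_leftComp hb,
    LinearMap.range_comp_of_range_eq_top _ (LinearEquiv.range _)]

lemma shortExact_ofHom (hd : Function.Injective d) (hπ : Function.Surjective π)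
    (hdπ : Function.Exact d π) :
    (ShortComplex.mk (ModuleCat.ofHom d) (ModuleCat.ofHom π)
      (ModuleCat.hom_ext hdπ.linearMap_comp_eq_zero)).ShortExact :=
  ModuleCat.shortComplex_shortExact _ hdπ hd hπ

variable [Module.Projective A P]

theorem subsingleton_ext_coker (hb : b.IsSelfAdjoint d) (hd : Function.Injective d)
    (hπ : Function.Surjective π) (hdπ : Function.Exact d π) {i : ℕ} (hi : i ≠ 1) :
    Subsingleton (((Ext A (ModuleCat.{u} A) i).obj (.op M)).obj (.of A A)) := by
  have : Projective (ModuleCat.of A P) := (IsProjective.iff_projective P).1 ‹_›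
  match i, hi with
  | 0, _ => exact subsingleton_ext_zero (shortExact_ofHom hd hπ hdπ) _ (injective_leftComp hb hd)
  | n + 2, _ => exact subsingleton_ext_add_two (shortExact_ofHom hd hπ hdπ) _ n

theorem nonempty_ext_one_equiv_coker (hb : b.IsSelfAdjoint d) (hd : Function.Injective d)
    (hπ : Function.Surjective π) (hdπ : Function.Exact d π) :
    Nonempty (((Ext A (ModuleCat.{u} A) 1).obj (.op M)).obj (.of A A) ≃ₗ[A] M) := by
  have : Projective (ModuleCat.of A P) := (IsProjective.iff_projective P).1 ‹_›
  exact ⟨extOneEquiv (shortExact_ofHom hd hπ hdπ) _ ≪≫ₗ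
    Submodule.Quotient.equiv _ _ (homEquivOfIsPerfPair b) (map_range_leftComp hb) ≪≫ₗ
    hdπ.linearEquivOfSurjective hπ⟩

end SelfDual

section PerfectPairing

variable {A ι M N : Type*} [CommRing A] [AddCommGroup M] [Module A M] [AddCommGroup N] [Module A N]
  [Finite ι]

lemma isPerfPair_of_apply_basis [DecidableEq ι] {b : M →ₗ[A] N →ₗ[A] A} (v : Module.Basis ι A M)
    (w : Module.Basis ι A N) (h : ∀ i j, b (v i) (w j) = if i = j then 1 else 0) :
    b.IsPerfPair := by
  have : Module.Free A N := .of_basis w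
  have : Module.Finite A N := .of_basis w
  have hb : b = (v.equiv w.dualBasis (.refl ι)).toLinearMap :=
    v.ext fun i => w.ext fun j => by simp [h, Finsupp.single_apply, eq_comm]
  refine .of_bijective b ?_
  rw [hb]
  exact LinearEquiv.bijective _

end PerfectPairing

/-- The ring `R[σ]`, regarded as an algebra over itself via `X i ↦ X i ^ N`. -/
def ExpandAlgebra (σ : Type v) (R : Type u) [CommRing R] (_N : ℕ) : Type (max u v) :=
  MvPolynomial σ R

namespace ExpandAlgebra

variable {σ : Type v} {R : Type u} [CommRing R] {N : ℕ}

instance : CommRing (ExpandAlgebra σ R N) := inferInstanceAs (CommRing (MvPolynomial σ R))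

instance : Algebra (MvPolynomial σ R) (ExpandAlgebra σ R N) :=
  RingHom.toAlgebra (expand N : MvPolynomial σ R →ₐ[R] MvPolynomial σ R).toRingHom

/-- The identity map from `R[σ]` to its copy `ExpandAlgebra σ R N`. -/
def of (N : ℕ) : MvPolynomial σ R ≃+* ExpandAlgebra σ R N := RingEquiv.refl _

lemma smul_of (a f : MvPolynomial σ R) : a • of N f = of N (expand N a * f) := rfl

variable [Finite σ]

/-- The exponent vector of a family of residues in `{0, …, N - 1}`. -/
def exponent (r : σ → Fin N) : σ →₀ ℕ := Finsupp.equivFunOnFinite.symm fun i => r i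

@[simp]
lemma exponent_apply (r : σ → Fin N) (i : σ) : exponent r i = r i := rfl

/-- The monomial `X ^ r`, all of whose exponents are less than `N`. -/
def residueMonomial (R : Type u) [CommRing R] (r : σ → Fin N) : ExpandAlgebra σ R N :=
  of N (monomial (exponent r) 1)

lemma monomial_smul_residueMonomial (m : σ →₀ ℕ) (c : R) (r : σ → Fin N) :
    monomial m c • residueMonomial R r = of N (monomial (N • m + exponent r) c) := by
  rw [residueMonomial, smul_of, expand_monomial, monomial_mul, mul_one]

/-- The exponent vector of a monomial, divided by `N` with truncation. -/
def quotient (N : ℕ) (m : σ →₀ ℕ) : σ →₀ ℕ := m.mapRange (· / N) (Nat.zero_div N)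

lemma quotient_exponent_rev_add_exponent (r : σ → Fin N) :
    quotient N (exponent (fun i => (r i).rev) + exponent r) = 0 := by
  ext i
  refine Nat.div_eq_of_lt ?_
  have h := (r i).2
  simp only [Finsupp.add_apply, exponent_apply, Fin.val_rev]
  lia

variable [NeZero N]

lemma coeff_expand_mul_monomial_exponent [DecidableEq (σ → Fin N)] (a : MvPolynomial σ R)
    (m : σ →₀ ℕ) (r s : σ → Fin N) :
    coeff (N • m + exponent s) (expand N a * monomial (exponent r) 1) =
      if r = s then coeff m a else 0 := by
  split_ifs with h
  · rw [h, coeff_mul_monomial, mul_one, coeff_expand_smul N (NeZero.ne N)]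
  · rw [coeff_mul_monomial']
    split_ifs with hle
    · obtain ⟨i, hi⟩ := Function.ne_iff.1 h
      rw [coeff_expand_of_not_dvd (i := i), zero_mul]
      intro hdvd
      have hmod : r i ≡ N * m i + s i [MOD N] := (Nat.modEq_iff_dvd' (hle i)).2 hdvd
      rw [Nat.ModEq, Nat.mul_add_mod] at hmod
      exact hi (Fin.ext (Nat.ModEq.eq_of_lt_of_lt hmod (r i).2 (s i).2))
    · rfl

lemma linearIndependent_residueMonomial :
    LinearIndependent (MvPolynomial σ R)
      (residueMonomial R : (σ → Fin N) → ExpandAlgebra σ R N) := by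
  classical
  have := Fintype.ofFinite σ
  refine Fintype.linearIndependent_iff.2 fun a ha s => MvPolynomial.ext _ _ fun m => ?_
  have h := congrArg (coeff (N • m + exponent s) ∘ (of N).symm) ha
  simpa [residueMonomial, smul_of, coeff_sum, coeff_expand_mul_monomial_exponent] using h

/-- The exponent vector of a monomial, modulo `N`. -/
def residue (N : ℕ) [NeZero N] (m : σ →₀ ℕ) (i : σ) : Fin N := Fin.ofNat N (m i)

lemma smul_quotient_add_exponent_residue (m : σ →₀ ℕ) :
    N • quotient N m + exponent (residue N m) = m :=
  Finsupp.ext fun i => Nat.div_add_mod (m i) N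

lemma of_monomial (m : σ →₀ ℕ) (c : R) :
    of N (monomial m c) = monomial (quotient N m) c • residueMonomial R (residue N m) := by
  rw [monomial_smul_residueMonomial, smul_quotient_add_exponent_residue]

lemma span_residueMonomial :
    Submodule.span (MvPolynomial σ R)
      (Set.range (residueMonomial R : (σ → Fin N) → ExpandAlgebra σ R N)) = ⊤ := by
  refine Submodule.eq_top_iff'.2 ((of N).surjective.forall.2 fun f => ?_)
  induction f using MvPolynomial.induction_on' with
  | add p q hp hq => exact map_add (of N) p q ▸ add_mem hp hq
  | monomial m c =>
    rw [of_monomial]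
    exact Submodule.smul_mem _ _ (Submodule.subset_span ⟨_, rfl⟩)

/-- The basis of `R[σ]` over itself, via `X i ↦ X i ^ N`, given by the monomials with all exponents
less than `N`. -/
def basis (σ : Type v) [Finite σ] (R : Type u) [CommRing R] (N : ℕ) [NeZero N] :
    Module.Basis (σ → Fin N) (MvPolynomial σ R) (ExpandAlgebra σ R N) :=
  .mk linearIndependent_residueMonomial span_residueMonomial.ge

lemma basis_apply (r : σ → Fin N) : basis σ R N r = residueMonomial R r := Module.Basis.mk_apply ..

lemma coord_of_monomial [DecidableEq (σ → Fin N)] (r : σ → Fin N) (m : σ →₀ ℕ) (c : R) :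
    (basis σ R N).coord r (of N (monomial m c)) =
      if residue N m = r then monomial (quotient N m) c else 0 := by
  rw [of_monomial, ← basis_apply, map_smul, Module.Basis.coord_apply, Module.Basis.repr_self,
    Finsupp.single_apply, smul_eq_mul, mul_ite, mul_one, mul_zero]

lemma ofNat_rev_add_eq_rev_zero_iff (a b : Fin N) :
    Fin.ofNat N (a.rev + b) = Fin.rev 0 ↔ a = b := by
  have hlast : (Fin.rev 0 : Fin N) = Fin.ofNat N (a.rev + a) := by
    have h : (a.rev + a : ℕ) = (Fin.rev 0 : Fin N) := by grind
    rw [h, Fin.ofNat_val_eq_self]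
  rw [hlast]
  refine ⟨fun h => ?_, fun h => by rw [h]⟩
  have hmod : a.rev + b ≡ a.rev + a [MOD N] := congrArg Fin.val h
  exact Fin.ext ((hmod.add_left_cancel' _).symm.eq_of_lt_of_lt a.2 b.2)

lemma residue_exponent_rev_add_exponent (r s : σ → Fin N) :
    residue N (exponent (fun i => (r i).rev) + exponent s) = (fun _ => Fin.rev 0) ↔ r = s := by
  simp only [funext_iff]
  exact forall_congr' fun i => ofNat_rev_add_eq_rev_zero_iff (r i) (s i)

/-- The pairing `(f, g) ↦ τ (f * g)` on `R[σ]` over itself via `X i ↦ X i ^ N`, where `τ` is the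
coordinate of the basis monomial with all exponents equal to `N - 1`. -/
def tracePairing (σ : Type v) [Finite σ] (R : Type u) [CommRing R] (N : ℕ) [NeZero N] :
    ExpandAlgebra σ R N →ₗ[MvPolynomial σ R] ExpandAlgebra σ R N →ₗ[MvPolynomial σ R]
      MvPolynomial σ R :=
  (LinearMap.mul _ _).compr₂ ((basis σ R N).coord fun _ => Fin.rev 0)

lemma tracePairing_basis_rev_basis [DecidableEq (σ → Fin N)] (r s : σ → Fin N) :
    tracePairing σ R N (basis σ R N fun i => (r i).rev) (basis σ R N s) =
      if r = s then 1 else 0 := by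
  have hmul : basis σ R N (fun i => (r i).rev) * basis σ R N s =
      of N (monomial (exponent (fun i => (r i).rev) + exponent s) 1) := by
    rw [basis_apply, basis_apply, residueMonomial, residueMonomial, ← map_mul, monomial_mul,
      mul_one]
  rw [tracePairing, LinearMap.compr₂_apply, LinearMap.mul_apply', hmul, coord_of_monomial]
  simp only [residue_exponent_rev_add_exponent]
  split_ifs with h
  · rw [h, quotient_exponent_rev_add_exponent, monomial_zero', C_1]
  · rfl

instance isPerfPair_tracePairing : (tracePairing σ R N).IsPerfPair := by
  classical
  refine isPerfPair_of_apply_basis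
    ((basis σ R N).reindex (.piCongrRight fun _ => Fin.revPerm)) (basis σ R N) fun r s => ?_
  rw [← tracePairing_basis_rev_basis, Module.Basis.reindex_apply]
  rfl

lemma isSelfAdjoint_tracePairing_mulLeft (q : ExpandAlgebra σ R N) :
    (tracePairing σ R N).IsSelfAdjoint (LinearMap.mulLeft (MvPolynomial σ R) q) := by
  intro f g
  simp only [tracePairing, LinearMap.compr₂_apply, LinearMap.mul_apply', LinearMap.mulLeft_apply]
  rw [mul_assoc, mul_left_comm]

instance : Module.Free (MvPolynomial σ R) (ExpandAlgebra σ R N) := .of_basis (basis σ R N)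

end ExpandAlgebra

theorem stmt3_general {R : Type u} [CommRing R] {σ : Type v} [Finite σ] {N : ℕ} [NeZero N]
    {q : ExpandAlgebra σ R N} (hq : q ∈ nonZeroDivisors (ExpandAlgebra σ R N))
    {M : ModuleCat.{max u v} (MvPolynomial σ R)}
    {π : ExpandAlgebra σ R N →ₗ[MvPolynomial σ R] M} (hπ : Function.Surjective π)
    (hqπ : Function.Exact (LinearMap.mulLeft (MvPolynomial σ R) q) π) :
    (∀ i : ℕ, i ≠ 1 →
      Subsingleton
        (((Ext (MvPolynomial σ R) (ModuleCat (MvPolynomial σ R)) i).obj (.op M)).obj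
          (.of _ (MvPolynomial σ R)))) ∧
    Nonempty
      (((Ext (MvPolynomial σ R) (ModuleCat (MvPolynomial σ R)) 1).obj (.op M)).obj
        (.of _ (MvPolynomial σ R)) ≃ₗ[MvPolynomial σ R] M) := by
  have hself := ExpandAlgebra.isSelfAdjoint_tracePairing_mulLeft q
  have hinj : Function.Injective (LinearMap.mulLeft (MvPolynomial σ R) q) :=
    fun _ _ => (mul_cancel_left_mem_nonZeroDivisors hq).1
  exact ⟨fun _ hi => subsingleton_ext_coker hself hinj hπ hqπ hi,
    nonempty_ext_one_equiv_coker hself hinj hπ hqπ⟩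

section Curve

lemma monic_monomial_sub_C {σ R : Type*} [CommRing R] (m : MonomialOrder σ) {d : σ →₀ ℕ}
    (hd : d ≠ 0) (c : R) : m.Monic (monomial d 1 - C c) := by
  classical
  nontriviality R
  rw [sub_eq_add_neg, ← C_neg]
  refine m.monic_monomial_one.add_of_lt ?_
  rw [m.degree_C, m.degree_monomial, if_neg one_ne_zero, map_zero]
  exact m.toSyn_lt_iff_ne_zero.2 ((m.toSyn_eq_zero_iff d).not.2 hd)

lemma X_mul_X_sub_C_mem_nonZeroDivisors {R : Type*} [CommRing R] (c : R) :
    (X 0 * X 1 - C c : MvPolynomial (Fin 2) R) ∈ nonZeroDivisors (MvPolynomial (Fin 2) R) := by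
  have hd : (.single 0 1 + .single 1 1 : Fin 2 →₀ ℕ) ≠ 0 := by simp
  have hX : (X 0 * X 1 : MvPolynomial (Fin 2) R) = monomial (.single 0 1 + .single 1 1) 1 := by
    rw [X, X, monomial_mul, mul_one]
  refine MonomialOrder.mem_nonZeroDivisors_of_leadingCoeff_mem_nonZeroDivisors (m := .lex) ?_
  rw [hX, (monic_monomial_sub_C _ hd c).leadingCoeff_eq_one]
  exact one_mem _

variable (R : Type) [CommRing R] (ϖ : R) (N : ℕ)

/-- The ideal `(XY - ϖ)` of `R[X,Y]`. -/
abbrev curveIdeal : Ideal (MvPolynomial (Fin 2) R) := Ideal.span {X 0 * X 1 - C ϖ}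

lemma toCurve_eq_mk_expand (f : MvPolynomial (Fin 2) R) :
    toCurve R ϖ N f = Ideal.Quotient.mk (curveIdeal R ϖ) (expand N f) := by
  have h : (aeval ![cX R ϖ ^ N, cY R ϖ ^ N] : MvPolynomial (Fin 2) R →ₐ[R] CurveRing R ϖ) =
      (Ideal.Quotient.mkₐ R _).comp (expand N) := by
    refine MvPolynomial.algHom_ext fun i => ?_
    fin_cases i <;> simp [cX, cY]
  exact DFunLike.congr_fun h f

/-- The quotient map `R[X,Y] → R[X,Y]/(XY - ϖ)`, linear over `R[T,S]` for `T ↦ X^N`, `S ↦ Y^N`. -/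
def curveProj : ExpandAlgebra (Fin 2) R N →ₗ[MvPolynomial (Fin 2) R] curveModCat R ϖ N where
  toFun f := Ideal.Quotient.mk (curveIdeal R ϖ) ((ExpandAlgebra.of N).symm f)
  map_add' _ _ := rfl
  map_smul' a f := congrArg (· * Ideal.Quotient.mk (curveIdeal R ϖ) ((ExpandAlgebra.of N).symm f))
    (toCurve_eq_mk_expand R ϖ N a).symm

lemma surjective_curveProj : Function.Surjective (curveProj R ϖ N) :=
  Ideal.Quotient.mk_surjective (I := curveIdeal R ϖ)

lemma exact_mulLeft_curveProj :
    Function.Exact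
      (LinearMap.mulLeft (MvPolynomial (Fin 2) R) (ExpandAlgebra.of N (X 0 * X 1 - C ϖ)))
      (curveProj R ϖ N) := by
  intro f
  refine Ideal.Quotient.eq_zero_iff_mem.trans (Ideal.mem_span_singleton.trans ?_)
  exact exists_congr fun _ => eq_comm

end Curve

/-!
For `A = R[T,S]` and `B = R[X,Y]/(XY - ϖ)` viewed as an `A`-module via `T ↦ X^N`,
`S ↦ Y^N`, the groups `Ext^i_A(B, A)` vanish for `i ≠ 1`, and `Ext^1_A(B, A)` is
isomorphic to `B` as an `A`-module (the `A`-linearity of the isomorphism `e` is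
expressed by `e (f • x) = toCurve f * e x`, which is the `A`-action on `B`).
-/
theorem stmt3 (R : Type) [CommRing R] (ϖ : R) (N : ℕ) (hN : 1 ≤ N) :
    (∀ i : ℕ, i ≠ 1 →
      Subsingleton
        (((Ext (MvPolynomial (Fin 2) R) (ModuleCat (MvPolynomial (Fin 2) R)) i).obj
            (Opposite.op (curveModCat R ϖ N))).obj
          (ModuleCat.of (MvPolynomial (Fin 2) R) (MvPolynomial (Fin 2) R)))) ∧
    ∃ e : (((Ext (MvPolynomial (Fin 2) R) (ModuleCat (MvPolynomial (Fin 2) R)) 1).obj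
            (Opposite.op (curveModCat R ϖ N))).obj
          (ModuleCat.of (MvPolynomial (Fin 2) R) (MvPolynomial (Fin 2) R)))
            ≃+ CurveRing R ϖ,
      ∀ (f : MvPolynomial (Fin 2) R) (x),
        e (f • x) = toCurve R ϖ N f * e x := by
  have : NeZero N := .of_pos hN
  obtain ⟨h, ⟨e⟩⟩ := stmt3_general (X_mul_X_sub_C_mem_nonZeroDivisors ϖ)
    (surjective_curveProj R ϖ N) (exact_mulLeft_curveProj R ϖ N)
  exact ⟨h, e.toAddEquiv, e.map_smul⟩

end
end

section
/- Let p be a prime and let R be a perfect commutative ring of characteristic p, with Frobenius automorphism φ (x ↦ x^p); for n ∈ ℤ write φ^{−n} for the (−n)-th power of φ as a ring automorphism (so φ^{−n} is the n-fold inverse Frobenius when n ≥ 0). Consider the additive maps on the group of finitely supported functions ℤ → R given by δ(r)_n = φ(r_{n−1}) − r_n and τ(r) = ∑_{n∈ℤ} φ^{−n}(r_n). Then the sequence 0 → (ℤ →₀ R) →^δ (ℤ →₀ R) →^τ R → 0 is exact: δ is injective, τ is surjective, and the kernel of τ equals the image of δ. -/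
/-!
Applying `φ⁻ⁿ` to the `n`-th coordinate is an automorphism of `ℤ →₀ R` which turns `δ` into
`F - 1` for the untwisted shift `F` and `τ` into the sum of the coordinates. In the untwisted
case, an element of `ker (F - 1)` is a constant function on `ℤ`, so it vanishes by finiteness of
its support; and modulo the range of `F - 1` a function `single n a` does not depend on `n`, so
every `r` is congruent to `single 0 (∑ₙ rₙ)`.
-/

section Untwisted

open Finsupp

variable {A : Type*} [AddCommGroup A]

/-- Multiplication by `F - 1` on the untwisted Laurent polynomials `∑ₙ rₙ Fⁿ` with coefficients in
an abelian group. -/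
noncomputable def shiftSubOne : (ℤ →₀ A) →+ (ℤ →₀ A) :=
  (Finsupp.domCongr (Equiv.addRight (1 : ℤ))).toAddMonoidHom - AddMonoidHom.id _

theorem shiftSubOne_apply (r : ℤ →₀ A) (n : ℤ) : shiftSubOne r n = r (n - 1) - r n := rfl

theorem shiftSubOne_single (n : ℤ) (a : A) :
    shiftSubOne (single n a) = single (n + 1) a - single n a := by
  simp [shiftSubOne]

theorem shiftSubOne_injective : Function.Injective (shiftSubOne (A := A)) := by
  rw [injective_iff_map_eq_zero]
  intro r hr
  have periodic : Function.Periodic r 1 := fun n ↦ by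
    have h := DFunLike.congr_fun hr (n + 1)
    rw [shiftSubOne_apply, add_sub_cancel_right] at h
    exact (sub_eq_zero.mp h).symm
  have constant (n : ℤ) : r n = r 0 := by simpa using periodic.int_mul_eq n
  obtain ⟨m, hm⟩ := Infinite.exists_notMem_finset r.support
  ext n
  rw [constant n, ← constant m, notMem_support_iff.mp hm, Finsupp.zero_apply]

theorem single_sub_single_zero_mem_range_shiftSubOne (n : ℤ) (a : A) :
    single n a - single 0 a ∈ (shiftSubOne (A := A)).range := by
  have periodic : Function.Periodic
      (fun m : ℤ ↦ (single m a : (ℤ →₀ A) ⧸ (shiftSubOne (A := A)).range)) 1 := fun m ↦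
    QuotientAddGroup.eq_iff_sub_mem.mpr ⟨single m a, shiftSubOne_single m a⟩
  simpa using QuotientAddGroup.eq_iff_sub_mem.mp (periodic.int_mul_eq n)

theorem sub_single_zero_degree_mem_range_shiftSubOne (r : ℤ →₀ A) :
    r - single 0 r.degree ∈ (shiftSubOne (A := A)).range := by
  induction r using Finsupp.induction_linear with
  | zero => simp
  | add r s hr hs =>
    rw [map_add, single_add, add_sub_add_comm]
    exact add_mem hr hs
  | single n a =>
    rw [degree_single]
    exact single_sub_single_zero_mem_range_shiftSubOne n a

theorem degree_shiftSubOne (r : ℤ →₀ A) : (shiftSubOne r).degree = 0 := by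
  induction r using Finsupp.induction_linear with
  | zero => simp
  | add r s hr hs => rw [map_add, map_add, hr, hs, add_zero]
  | single n a => rw [shiftSubOne_single, map_sub, degree_single, degree_single, sub_self]

theorem exact_shiftSubOne_degree :
    Function.Exact (shiftSubOne (A := A)) (degree : (ℤ →₀ A) →+ A) := by
  refine fun r ↦ ⟨fun hr ↦ ?_, ?_⟩
  · simpa [hr] using sub_single_zero_degree_mem_range_shiftSubOne r
  · rintro ⟨s, rfl⟩
    exact degree_shiftSubOne s

end Untwisted

section Twisted

open Finsupp

variable {G A : Type*} [Group G] [AddCommGroup A] [DistribMulAction G A]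

/-- The automorphism `(rₙ) ↦ (g⁻ⁿ • rₙ)` of `ℤ →₀ A`: it trades the twisted commutation rule
`F a = (g • a) F` for the untwisted one `F a = a F`. -/
noncomputable def untwist (g : G) : (ℤ →₀ A) ≃+ (ℤ →₀ A) where
  toFun r := onFinset r.support (fun n ↦ g ^ (-n) • r n) fun n ↦ by simp [smul_eq_zero_iff_eq]
  invFun r := onFinset r.support (fun n ↦ g ^ n • r n) fun n ↦ by simp [smul_eq_zero_iff_eq]
  left_inv r := by ext; simp
  right_inv r := by ext; simp
  map_add' r s := by ext; simp

theorem untwist_apply (g : G) (r : ℤ →₀ A) (n : ℤ) : untwist g r n = g ^ (-n) • r n := rfl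

theorem degree_untwist (g : G) (r : ℤ →₀ A) :
    (untwist g r).degree = r.sum fun n a ↦ g ^ (-n) • a :=
  onFinset_sum (g := fun _ a ↦ a) (fun n ↦ by simp [smul_eq_zero_iff_eq]) fun _ ↦ rfl

theorem shiftSubOne_untwist (g : G) {r s : ℤ →₀ A} (hs : ∀ n, s n = g • r (n - 1) - r n) :
    shiftSubOne (untwist g r) = untwist g s := by
  ext n
  have zpow_cancel : g ^ (-(n - 1)) = g ^ (-n) * g := by
    rw [← zpow_add_one, neg_sub', sub_neg_eq_add]
  simp only [shiftSubOne_apply, untwist_apply, hs, smul_sub, zpow_cancel, mul_smul]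

theorem stmt4_general (g : G) (δ : (ℤ →₀ A) →+ (ℤ →₀ A)) (τ : (ℤ →₀ A) →+ A)
    (hδ : ∀ (r : ℤ →₀ A) (n : ℤ), δ r n = g • r (n - 1) - r n)
    (hτ : ∀ r : ℤ →₀ A, τ r = r.sum fun n a ↦ g ^ (-n) • a) :
    Function.Injective δ ∧ Function.Surjective τ ∧
      AddMonoidHom.range δ = AddMonoidHom.ker τ := by
  have untwist_δ (r : ℤ →₀ A) : shiftSubOne (untwist g r) = untwist g (δ r) :=
    shiftSubOne_untwist g (hδ r)
  have untwist_τ (r : ℤ →₀ A) : (untwist g r).degree = τ r := by rw [degree_untwist, hτ]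
  have exact_δ_τ : Function.Exact δ τ :=
    Function.Exact.of_ladder_addEquiv_of_exact' (untwist g) (untwist g) (AddEquiv.refl A)
      (AddMonoidHom.ext untwist_δ) (AddMonoidHom.ext untwist_τ) exact_shiftSubOne_degree
  refine ⟨fun r s hrs ↦ ?_, fun a ↦ ⟨single 0 a, ?_⟩, exact_δ_τ.addMonoidHom_ker_eq.symm⟩
  · apply (untwist g).injective
    apply shiftSubOne_injective
    rw [untwist_δ, untwist_δ, hrs]
  · simp [hτ]

end Twisted

/-!
For a perfect commutative ring `R` of characteristic `p`, with Frobenius `φ`, the maps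
`δ(r)ₙ = φ(r_{n-1}) - rₙ` and `τ(r) = ∑ₙ φ^{-n}(rₙ)` on finitely supported functions
`ℤ →₀ R` fit into a short exact sequence `0 → (ℤ →₀ R) → (ℤ →₀ R) → R → 0`:
`δ` is injective, `τ` is surjective, and `range δ = ker τ`.
-/
theorem stmt4 (p : ℕ) (hp : p.Prime) (R : Type) [CommRing R] [CharP R p]
    [ExpChar R p] [PerfectRing R p]
    (δ : (ℤ →₀ R) →+ (ℤ →₀ R)) (τ : (ℤ →₀ R) →+ R)
    (hδ : ∀ (r : ℤ →₀ R) (n : ℤ), δ r n = frobenius R p (r (n - 1)) - r n)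
    (hτ : ∀ r : ℤ →₀ R,
      τ r = r.sum fun n x => ((frobeniusEquiv R p : RingAut R) ^ (-n)) x) :
    Function.Injective δ ∧ Function.Surjective τ ∧
      AddMonoidHom.range δ = AddMonoidHom.ker τ :=
  stmt4_general (frobeniusEquiv R p : RingAut R) δ τ hδ hτ
end

section
/- Let C and D be monoidal categories and let F : C → D be a strong monoidal functor admitting a right adjoint G, with adjunction unit η and counit ε. Assume the projection formula holds: for all objects X of C and Y of D, the canonical morphism X ⊗ G(Y) → G(F(X) ⊗ Y) — defined as the adjoint transpose of the composite F(X ⊗ G(Y)) ≅ F(X) ⊗ F(G(Y)) → F(X) ⊗ Y, where the first map is the monoidal structure isomorphism of F and the second is id ⊗ ε_Y — is an isomorphism. Then F is fully faithful if and only if the unit morphism η at the monoidal unit, 𝟙_C → G(F(𝟙_C)), is an isomorphism. -/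
open CategoryTheory MonoidalCategory

/-!
The unit of the adjunction at a tensor product factors through the projection formula: up to
`δ : F (X ⊗ X') ⟶ F X ⊗ F X'`, the unit at `X ⊗ X'` is `X ◁ (unit at X')` followed by the projection
morphism for `X` and `F X'`. Taking `X' = 𝟙_ C` and using `X ⊗ 𝟙_ C ≅ X`, invertibility of the unit
at `𝟙_ C` gives invertibility at every `X`.
-/

section ProjectionFormula

open Functor.OplaxMonoidal

variable {C D : Type*} [Category* C] [Category* D] [MonoidalCategory C] [MonoidalCategory D]
  {F : C ⥤ D} [F.OplaxMonoidal] {G : D ⥤ C} (adj : F ⊣ G)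

/-- The canonical morphism `X ⊗ G Y ⟶ G (F X ⊗ Y)` whose invertibility is the projection formula
for `adj : F ⊣ G`. It is defined from the oplax structure map `δ` of `F`, which for strong monoidal
`F` is the inverse of `μ`. -/
def projectionMorphism (X : C) (Y : D) : X ⊗ G.obj Y ⟶ G.obj (F.obj X ⊗ Y) :=
  adj.homEquiv (X ⊗ G.obj Y) (F.obj X ⊗ Y) (δ F X (G.obj Y) ≫ F.obj X ◁ adj.counit.app Y)

lemma whiskerLeft_unit_comp_projectionMorphism (X X' : C) :
    X ◁ adj.unit.app X' ≫ projectionMorphism adj X (F.obj X') =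
      adj.unit.app (X ⊗ X') ≫ G.map (δ F X X') := by
  have transpose_eq : F.map (X ◁ adj.unit.app X') ≫ δ F X (G.obj (F.obj X')) ≫
      F.obj X ◁ adj.counit.app (F.obj X') = δ F X X' :=
    calc
      _ = δ F X X' ≫ F.obj X ◁ F.map (adj.unit.app X') ≫
            F.obj X ◁ adj.counit.app (F.obj X') :=
        (δ_natural_right_assoc F X (adj.unit.app X') _).symm
      _ = δ F X X' := by
        rw [← whiskerLeft_comp, adj.left_triangle_components, whiskerLeft_id, Category.comp_id]
  calc
    _ = adj.homEquiv _ _ (F.map (X ◁ adj.unit.app X') ≫ δ F X (G.obj (F.obj X')) ≫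
          F.obj X ◁ adj.counit.app (F.obj X')) :=
      (adj.homEquiv_naturality_left _ _).symm
    _ = adj.homEquiv _ _ (δ F X X') := congrArg _ transpose_eq
    _ = adj.unit.app (X ⊗ X') ≫ G.map (δ F X X') := adj.homEquiv_unit _ _ _

lemma isIso_unit_app_tensorObj (X X' : C) [IsIso (δ F X X')]
    [IsIso (projectionMorphism adj X (F.obj X'))] [IsIso (adj.unit.app X')] :
    IsIso (adj.unit.app (X ⊗ X')) := by
  have : IsIso (adj.unit.app (X ⊗ X') ≫ G.map (δ F X X')) := by
    rw [← whiskerLeft_unit_comp_projectionMorphism]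
    infer_instance
  exact IsIso.of_isIso_comp_right _ (G.map (δ F X X'))

variable (F) in
lemma isIso_δ_tensorUnit [IsIso (η F)] (X : C) : IsIso (δ F X (𝟙_ C)) := by
  have : IsIso (δ F X (𝟙_ C) ≫ F.obj X ◁ η F ≫ (ρ_ (F.obj X)).hom) := by
    rw [right_unitality_hom]
    infer_instance
  exact IsIso.of_isIso_comp_right _ (F.obj X ◁ η F ≫ (ρ_ (F.obj X)).hom)

lemma isIso_unit_app_of_isIso_unit_app_tensorUnit [IsIso (η F)] (X : C)
    [IsIso (projectionMorphism adj X (F.obj (𝟙_ C)))] [IsIso (adj.unit.app (𝟙_ C))] :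
    IsIso (adj.unit.app X) := by
  have := isIso_δ_tensorUnit F X
  rw [← NatTrans.isIso_app_iff_of_iso adj.unit (ρ_ X)]
  exact isIso_unit_app_tensorObj adj X (𝟙_ C)

theorem stmt7_general [IsIso (η F)]
    (hproj : ∀ X : C, IsIso (projectionMorphism adj X (F.obj (𝟙_ C)))) :
    (F.Full ∧ F.Faithful) ↔ IsIso (adj.unit.app (𝟙_ C)) := by
  constructor
  · rintro ⟨_, _⟩
    infer_instance
  · intro
    have := isIso_unit_app_of_isIso_unit_app_tensorUnit adj
    exact ⟨adj.full_L_of_isSplitEpi_unit_app, adj.faithful_L_of_mono_unit_app⟩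

end ProjectionFormula

/-!
Let `F : C ⥤ D` be a strong monoidal functor between monoidal categories, with right
adjoint `G`.  Assume the projection formula: for all `X : C`, `Y : D` the canonical map
`X ⊗ G Y → G (F X ⊗ Y)` — the adjoint transpose of
`F (X ⊗ G Y) ≅ F X ⊗ F (G Y) → F X ⊗ Y` (monoidal structure isomorphism followed by
`id ⊗ counit`) — is an isomorphism.  Then `F` is fully faithful if and only if the unit
of the adjunction at the monoidal unit, `𝟙_C ⟶ G (F (𝟙_C))`, is an isomorphism.
-/
theorem stmt7 {C D : Type*} [Category C] [Category D]
    [MonoidalCategory C] [MonoidalCategory D]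
    (F : C ⥤ D) [F.Monoidal] (G : D ⥤ C) (adj : F ⊣ G)
    (hproj : ∀ (X : C) (Y : D),
      IsIso ((adj.homEquiv (X ⊗ G.obj Y) (F.obj X ⊗ Y))
        ((Functor.Monoidal.μIso F X (G.obj Y)).inv ≫ (F.obj X ◁ adj.counit.app Y)))) :
    (F.Full ∧ F.Faithful) ↔ IsIso (adj.unit.app (𝟙_ C)) :=
  stmt7_general adj fun X => hproj X (F.obj (𝟙_ C))
end

section
/- Let C be a symmetric monoidal category, let A be an object of C and let μ : 𝟙 → A be a morphism such that the composite φ := (μ ⊗ id_A) ∘ λ_A^{-1} : A → A ⊗ A is an isomorphism, where λ_A : 𝟙 ⊗ A ≅ A is the left unitor. Then A admits a unique structure of a commutative monoid object in C whose unit is μ; its multiplication is necessarily the inverse φ^{-1} : A ⊗ A → A. In particular, for any two commutative monoid structures on A with unit μ, the multiplications coincide. -/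
open CategoryTheory MonoidalCategory

/-!
The left unit law says that `m` is a left inverse of the isomorphism `φ = (μ ⊗ id) ∘ λ⁻¹`, so it
forces `m = φ⁻¹`. The other laws can be tested on units, because every whiskering of `μ` by `A` is
an isomorphism: associativity after precomposing with `μ ▷ A ▷ A`, commutativity after precomposing
with `A ◁ μ`. For the right unit law, the interchange law shows that an endomorphism `f` of `A` is
determined by `μ ≫ f`, and `(ρ_ A).inv ≫ A ◁ μ` agrees with `φ` after precomposing with `μ`.
-/

section Monoidal

variable {C : Type*} [Category C] [MonoidalCategory C] {A : C} {μ : 𝟙_ C ⟶ A}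

variable (μ) in
theorem eq_of_whiskerLeft_eq_of_mono_whiskerRight {X B : C} [Mono (μ ▷ B)] {f g : X ⟶ B}
    (h : A ◁ f = A ◁ g) : f = g := by
  rw [← whiskerLeft_iff, ← cancel_mono (μ ▷ B), whisker_exchange, whisker_exchange, h]

variable (μ) in
theorem eq_of_comp_eq_of_epi_whiskerLeft {X Y B : C} {u : Y ⟶ X} [Epi (A ◁ u)] [Mono (μ ▷ B)]
    {f g : X ⟶ B} (h : u ≫ f = u ≫ g) : f = g := by
  apply eq_of_whiskerLeft_eq_of_mono_whiskerRight μ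
  rw [← cancel_epi (A ◁ u), ← MonoidalCategory.whiskerLeft_comp, h,
    MonoidalCategory.whiskerLeft_comp]

theorem whiskerRight_comp_eq_leftUnitor_hom_iff_eq_inv [IsIso ((λ_ A).inv ≫ μ ▷ A)]
    {m : A ⊗ A ⟶ A} : μ ▷ A ≫ m = (λ_ A).hom ↔ m = inv ((λ_ A).inv ≫ μ ▷ A) := by
  rw [← Iso.inv_comp_eq_id, ← Category.assoc, hom_comp_eq_id]

theorem whiskerLeft_comp_eq_rightUnitor_hom_of_left_unital [Epi (A ◁ μ)] [Mono (μ ▷ A)]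
    {m : A ⊗ A ⟶ A} (one_mul : μ ▷ A ≫ m = (λ_ A).hom) : A ◁ μ ≫ m = (ρ_ A).hom := by
  rw [← Iso.inv_comp_eq_id]
  apply eq_of_comp_eq_of_epi_whiskerLeft μ (u := μ)
  calc μ ≫ (ρ_ A).inv ≫ A ◁ μ ≫ m
      = μ ≫ (λ_ A).inv ≫ μ ▷ A ≫ m := by
        rw [rightUnitor_inv_naturality_assoc, leftUnitor_inv_naturality_assoc,
          whisker_exchange_assoc, unitors_inv_equal]
    _ = μ ≫ 𝟙 A := by rw [one_mul, Iso.inv_hom_id]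

theorem whiskerRight_comp_eq_associator_hom_comp_of_left_unital [Epi (μ ▷ A ▷ A)]
    {m : A ⊗ A ⟶ A} (one_mul : μ ▷ A ≫ m = (λ_ A).hom) :
    m ▷ A ≫ m = (α_ A A A).hom ≫ A ◁ m ≫ m := by
  rw [← cancel_epi (μ ▷ A ▷ A)]
  calc μ ▷ A ▷ A ≫ m ▷ A ≫ m
      = (λ_ A).hom ▷ A ≫ m := by rw [← comp_whiskerRight_assoc, one_mul]
    _ = (α_ (𝟙_ C) A A).hom ≫ 𝟙_ C ◁ m ≫ (λ_ A).hom := by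
        rw [leftUnitor_naturality, leftUnitor_whiskerRight, Category.assoc]
    _ = μ ▷ A ▷ A ≫ (α_ A A A).hom ≫ A ◁ m ≫ m := by
        rw [← one_mul, whisker_exchange_assoc, associator_naturality_left_assoc]

end Monoidal

section Braided

variable {C : Type*} [Category C] [MonoidalCategory C] [BraidedCategory C] {A : C}

theorem isIso_whiskerLeft_of_isIso_whiskerRight {X Y : C} (f : X ⟶ Y) [IsIso (f ▷ A)] :
    IsIso (A ◁ f) := by
  have : IsIso (A ◁ f ≫ (β_ A Y).hom) := by
    rw [BraidedCategory.braiding_naturality_right]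
    infer_instance
  exact IsIso.of_isIso_comp_right _ (β_ A Y).hom

theorem braiding_hom_comp_eq_of_unital {μ : 𝟙_ C ⟶ A} [Epi (A ◁ μ)] {m : A ⊗ A ⟶ A}
    (one_mul : μ ▷ A ≫ m = (λ_ A).hom) (mul_one : A ◁ μ ≫ m = (ρ_ A).hom) :
    (β_ A A).hom ≫ m = m := by
  rw [← cancel_epi (A ◁ μ), BraidedCategory.braiding_naturality_right_assoc, one_mul, mul_one,
    braiding_leftUnitor]

end Braided

theorem stmt8_general {C : Type*} [Category C] [MonoidalCategory C] [BraidedCategory C]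
    (A : C) (μ : 𝟙_ C ⟶ A) [IsIso ((λ_ A).inv ≫ (μ ▷ A))] :
    (∃ m : A ⊗ A ⟶ A,
      (μ ▷ A) ≫ m = (λ_ A).hom ∧
      (A ◁ μ) ≫ m = (ρ_ A).hom ∧
      (m ▷ A) ≫ m = (α_ A A A).hom ≫ (A ◁ m) ≫ m ∧
      (β_ A A).hom ≫ m = m) ∧
    (∀ m : A ⊗ A ⟶ A, (μ ▷ A) ≫ m = (λ_ A).hom → m = inv ((λ_ A).inv ≫ (μ ▷ A))) := by
  have : IsIso (μ ▷ A) := IsIso.of_isIso_comp_left (λ_ A).inv _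
  have : IsIso (A ◁ μ) := isIso_whiskerLeft_of_isIso_whiskerRight μ
  have one_mul : μ ▷ A ≫ inv ((λ_ A).inv ≫ μ ▷ A) = (λ_ A).hom :=
    whiskerRight_comp_eq_leftUnitor_hom_iff_eq_inv.mpr rfl
  have mul_one := whiskerLeft_comp_eq_rightUnitor_hom_of_left_unital one_mul
  exact ⟨⟨_, one_mul, mul_one, whiskerRight_comp_eq_associator_hom_comp_of_left_unital one_mul,
    braiding_hom_comp_eq_of_unital one_mul mul_one⟩,
    fun _ => whiskerRight_comp_eq_leftUnitor_hom_iff_eq_inv.mp⟩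

/-!
Let `C` be a symmetric monoidal category, `A` an object and `μ : 𝟙 ⟶ A` such that
`φ = (μ ▷ A) ∘ λ⁻¹ : A ⟶ A ⊗ A` is an isomorphism (an "idempotent algebra").  Then `A`
admits a unique commutative monoid structure with unit `μ`, and its multiplication is
necessarily `φ⁻¹`.  In particular any two commutative monoid multiplications on `A`
with unit `μ` coincide.
-/
theorem stmt8 {C : Type*} [Category C] [MonoidalCategory C] [SymmetricCategory C]
    (A : C) (μ : 𝟙_ C ⟶ A) [IsIso ((λ_ A).inv ≫ (μ ▷ A))] :
    (∃ m : A ⊗ A ⟶ A,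
      (μ ▷ A) ≫ m = (λ_ A).hom ∧
      (A ◁ μ) ≫ m = (ρ_ A).hom ∧
      (m ▷ A) ≫ m = (α_ A A A).hom ≫ (A ◁ m) ≫ m ∧
      (β_ A A).hom ≫ m = m) ∧
    (∀ m : A ⊗ A ⟶ A,
      ((μ ▷ A) ≫ m = (λ_ A).hom ∧
       (A ◁ μ) ≫ m = (ρ_ A).hom ∧
       (m ▷ A) ≫ m = (α_ A A A).hom ≫ (A ◁ m) ≫ m ∧
       (β_ A A).hom ≫ m = m) →
      m = inv ((λ_ A).inv ≫ (μ ▷ A))) := by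
  obtain ⟨exists_mul, mul_unique⟩ := stmt8_general A μ
  exact ⟨exists_mul, fun m hm => mul_unique m hm.1⟩
end
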